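/- Let G be a distance-regular graph of diameter 3 with intersection array {k, b₁, b₂; 1, c₂, c₃}, with distinct adjacency eigenvalues k > θ₁ > θ₂ > θ₃, and let q ≠ 0. For 1 ≤ i < j ≤ 3 and l the unique element of {1,2,3}∖{i,j}, one has R_q(θ_i) = R_q(θ_j) if and only if θ_l = qc₂ − b₂ + a₃. -/

import Mathlib

open Matrix

variable {V : Type*} [Fintype V] [DecidableEq V]

/-- The distance-`i` matrix of a graph: the `(x,y)` entry is 1 if `dist x y = i`, else 0. -/
noncomputable def distM (G : SimpleGraph V) (i : ℕ) : Matrix V V ℝ :=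
  Matrix.of fun x y => if G.dist x y = i then (1 : ℝ) else 0

/-- The `q`-distance matrix `𝔻_q = ∑_{i=1}^D (1 + 1/q + ⋯ + 1/q^{i-1}) • A_i`. -/
noncomputable def qDist (G : SimpleGraph V) (D : ℕ) (q : ℝ) : Matrix V V ℝ :=
  ∑ i ∈ Finset.Icc 1 D, (∑ j ∈ Finset.range i, (1 / q) ^ j) • distM G i

/-- `G` is distance-regular with diameter `D` and intersection numbers `b i`, `c i`
(with `c 1 = 1`): for any vertices `x, y` at distance `i ≤ D`, the number of neighbors
of `y` at distance `i - 1` from `x` is `c i` and the number of neighbors of `y` at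
distance `i + 1` from `x` is `b i`. -/
def IsDRG (G : SimpleGraph V) (D : ℕ) (b c : ℕ → ℕ) : Prop :=
  G.Connected ∧
  (∀ x y : V, G.dist x y ≤ D) ∧
  (∃ x y : V, G.dist x y = D) ∧
  c 1 = 1 ∧
  ∀ i ≤ D, ∀ x y : V, G.dist x y = i →
    ({z : V | G.Adj y z ∧ G.dist x z = i - 1} : Set V).ncard = c i ∧
    ({z : V | G.Adj y z ∧ G.dist x z = i + 1} : Set V).ncard = b i

/-- `a i = k - b i - c i` as a real number, where `k = b 0`. -/
noncomputable def aInt (b c : ℕ → ℕ) (i : ℕ) : ℝ := (b 0 : ℝ) - (b i : ℝ) - (c i : ℝ)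

/-- `R_q(θ) = −(1/(c₂q²))·((q²+q+1)c₂ − k + ((q+1)c₂ − a₁)θ + θ²)`, the `q`-distance
eigenvalue corresponding to a nontrivial adjacency eigenvalue `θ` (here `k = b 0`,
`a₁ = k - b 1 - c 1`). -/
noncomputable def Rq (b c : ℕ → ℕ) (q θ : ℝ) : ℝ :=
  -(1 / ((c 2 : ℝ) * q ^ 2)) *
    ((q ^ 2 + q + 1) * (c 2 : ℝ) - (b 0 : ℝ) + ((q + 1) * (c 2 : ℝ) - aInt b c 1) * θ + θ ^ 2)

/-!
Let `v` be an adjacency eigenvector with `v y ≠ 0`. The sums of `v` over the spheres around `y` form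
a left eigenvector, with the same eigenvalue, of the tridiagonal intersection matrix `L`, which has
order `D + 1` and diagonal `a₀, …, a_D`. So `D + 1` distinct adjacency eigenvalues sum to `tr L`;
for `D = 3` this reads `θ₁ + θ₂ + θ₃ = a₁ + a₂ + a₃ - k`. On the other hand `R_q` is quadratic, so
for `θᵢ ≠ θⱼ` the equation `R_q(θᵢ) = R_q(θⱼ)` just prescribes `θᵢ + θⱼ`, hence `θ_l`.
-/

section Spectrum

variable {n K : Type*} [Fintype n] [DecidableEq n] [Field K] {M : Matrix n n K}

theorem mem_spectrum_iff_exists_vecMul_eq_smul {t : K} :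
    t ∈ spectrum K M ↔ ∃ v ≠ 0, v ᵥ* M = t • v := by
  rw [spectrum.mem_iff, isUnit_iff_isUnit_det, isUnit_iff_ne_zero, not_not,
    ← exists_vecMul_eq_zero_iff]
  simp only [vecMul_sub, Algebra.algebraMap_eq_smul_one, vecMul_smul, vecMul_one, sub_eq_zero,
    eq_comm]

theorem trace_eq_sum_of_injective_of_mem_spectrum {θ : n → K} (hinj : Function.Injective θ)
    (hmem : ∀ i, θ i ∈ spectrum K M) : M.trace = ∑ i, θ i := by
  have hsub : (Finset.univ.val.map θ) ⊆ M.charpoly.roots := by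
    intro t ht
    obtain ⟨i, -, rfl⟩ := Multiset.mem_map.1 ht
    exact (Polynomial.mem_roots M.charpoly_monic.ne_zero).2
      (mem_spectrum_iff_isRoot_charpoly.1 (hmem i))
  have hcard : (Finset.univ.val.map θ).card = M.charpoly.natDegree := by
    rw [Multiset.card_map, Finset.card_val, Finset.card_univ, charpoly_natDegree_eq_dim]
  have hroots : Finset.univ.val.map θ = M.charpoly.roots :=
    Multiset.eq_of_le_of_card_le
      ((Multiset.le_iff_subset (Finset.univ.nodup.map hinj)).2 hsub)
      (M.charpoly.card_roots'.trans_eq hcard.symm)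
  have hsplits : M.charpoly.Splits := by
    rw [Polynomial.splits_iff_card_roots, ← hroots, hcard]
  rw [trace_eq_sum_roots_charpoly_of_splits hsplits, ← hroots]
  rfl

end Spectrum

section Distance

variable {W : Type*} {G : SimpleGraph W}

theorem exists_adj_dist_add_one_eq {x y : W} (h : G.dist x y ≠ 0) :
    ∃ z, G.Adj y z ∧ G.dist x z + 1 = G.dist x y := by
  rw [G.dist_comm] at h
  obtain ⟨p, hp⟩ := G.exists_walk_of_dist_ne_zero h
  cases p with
  | nil => exact absurd G.dist_self h
  | @cons _ z _ hyz p =>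
    refine ⟨z, hyz, ?_⟩
    have hle : G.dist z x ≤ p.length := G.dist_le p
    have hstep := hyz.symm.diff_dist_adj (u := x)
    rw [SimpleGraph.Walk.length_cons] at hp
    rw [G.dist_comm (u := z)] at hle
    rw [G.dist_comm] at hp
    lia

theorem exists_dist_eq_of_le_dist {x y : W} {i : ℕ} (hi : i ≤ G.dist x y) :
    ∃ z, G.dist x z = i := by
  induction hi using Nat.decreasingInduction with
  | self => exact ⟨y, rfl⟩
  | of_succ i _ ih =>
    obtain ⟨z, hz⟩ := ih
    obtain ⟨w, -, hw⟩ := exists_adj_dist_add_one_eq (hz.trans_ne i.succ_ne_zero)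
    exact ⟨w, by lia⟩

theorem ncard_neighborSet_eq_add_ncard_dist [Finite W] (x y : W) :
    (G.neighborSet y).ncard = {z | G.Adj y z ∧ G.dist x z + 1 = G.dist x y}.ncard +
      {z | G.Adj y z ∧ G.dist x z = G.dist x y}.ncard +
      {z | G.Adj y z ∧ G.dist x z = G.dist x y + 1}.ncard := by
  rw [← Set.ncard_union_eq (Set.disjoint_left.2 (by grind)),
    ← Set.ncard_union_eq (Set.disjoint_left.2 (by grind))]
  congr 1
  ext z
  have hstep : G.Adj y z → _ := SimpleGraph.Adj.diff_dist_adj (u := x)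
  simp only [SimpleGraph.mem_neighborSet, Set.mem_union, Set.mem_ofPred_eq]
  grind

end Distance

omit [DecidableEq V] in
theorem distM_one_mul_distM_apply (G : SimpleGraph V) (j : ℕ) (x y : V) :
    (distM G 1 * distM G j) x y = {z | G.Adj x z ∧ G.dist y z = j}.ncard := by
  classical
  rw [Set.ncard_eq_toFinset_card', Set.toFinset_ofPred, Finset.card_filter, Nat.cast_sum,
    Matrix.mul_apply]
  refine Finset.sum_congr rfl fun z _ => ?_
  by_cases hxz : G.Adj x z <;>
    simp [distM, SimpleGraph.dist_eq_one_iff_adj, G.dist_comm (u := z), hxz]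

/-- The intersection number `p^i_{1,j}`: in a distance-regular graph, the number of neighbors of `y`
at distance `j` from `x` when `x` and `y` are at distance `i`. -/
noncomputable def intersectionNumber (b c : ℕ → ℕ) (i j : ℕ) : ℝ :=
  if j + 1 = i then (c i : ℝ) else if j = i then aInt b c i else if j = i + 1 then (b i : ℝ) else 0

/-- The intersection matrix of a distance-regular graph of diameter `D`, by which the adjacency
matrix acts on the span of the distance matrices. Row `i` holds `c i`, `a i`, `b i`. -/
noncomputable def intersectionMatrix (D : ℕ) (b c : ℕ → ℕ) :
    Matrix (Fin (D + 1)) (Fin (D + 1)) ℝ :=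
  Matrix.of fun i j => intersectionNumber b c i j

theorem trace_intersectionMatrix (D : ℕ) (b c : ℕ → ℕ) :
    (intersectionMatrix D b c).trace = ∑ i : Fin (D + 1), aInt b c i := by
  simp [Matrix.trace, intersectionMatrix, intersectionNumber]

namespace IsDRG

section IntersectionNumbers

variable {W : Type*} {G : SimpleGraph W} {D : ℕ} {b c : ℕ → ℕ}

theorem dist_le (hG : IsDRG G D b c) (x y : W) : G.dist x y ≤ D :=
  hG.2.1 x y

theorem ncard_neighborSet (hG : IsDRG G D b c) (y : W) : (G.neighborSet y).ncard = b 0 := by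
  obtain ⟨-, -, -, -, hcount⟩ := hG
  simpa [SimpleGraph.neighborSet] using (hcount 0 D.zero_le y y G.dist_self).2

theorem ncard_adj_dist_eq_dist_add_one (hG : IsDRG G D b c) (x y : W) :
    {z | G.Adj y z ∧ G.dist x z = G.dist x y + 1}.ncard = b (G.dist x y) := by
  obtain ⟨-, hdiam, -, -, hcount⟩ := hG
  exact (hcount _ (hdiam x y) x y rfl).2

theorem ncard_adj_dist_add_one_eq_dist (hG : IsDRG G D b c) (x y : W) :
    {z | G.Adj y z ∧ G.dist x z + 1 = G.dist x y}.ncard = c (G.dist x y) := by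
  obtain ⟨hconn, hdiam, -, -, hcount⟩ := hG
  rw [← (hcount _ (hdiam x y) x y rfl).1]
  congr 1
  ext z
  refine and_congr_right fun hyz => ?_
  -- For `x = y` the truncated `dist x y - 1` is `0`, a distance no neighbor of `y` has.
  have hself : G.dist x y = 0 → G.dist x z = 1 := fun h =>
    SimpleGraph.dist_eq_one_iff_adj.2 (hconn.dist_eq_zero_iff.1 h ▸ hyz)
  lia

theorem c_zero (hG : IsDRG G D b c) : c 0 = 0 := by
  obtain ⟨x⟩ := hG.1.nonempty
  simpa using (hG.ncard_adj_dist_add_one_eq_dist x x).symm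

theorem aInt_zero (hG : IsDRG G D b c) : aInt b c 0 = 0 := by
  simp [aInt, hG.c_zero]

theorem c_ne_zero [Finite W] (hG : IsDRG G D b c) {i : ℕ} (hi : i ≠ 0) (hiD : i ≤ D) :
    c i ≠ 0 := by
  obtain ⟨x, y, hxy⟩ := hG.2.2.1
  obtain ⟨w, rfl⟩ := exists_dist_eq_of_le_dist (hiD.trans_eq hxy.symm)
  rw [← hG.ncard_adj_dist_add_one_eq_dist]
  exact Set.ncard_ne_zero_of_mem (exists_adj_dist_add_one_eq hi).choose_spec

theorem ncard_adj_dist_eq_dist [Finite W] (hG : IsDRG G D b c) (x y : W) :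
    ({z | G.Adj y z ∧ G.dist x z = G.dist x y}.ncard : ℝ) = aInt b c (G.dist x y) := by
  have hpartition := ncard_neighborSet_eq_add_ncard_dist (G := G) x y
  rw [hG.ncard_neighborSet, hG.ncard_adj_dist_add_one_eq_dist,
    hG.ncard_adj_dist_eq_dist_add_one] at hpartition
  rw [aInt, hpartition]
  push_cast
  ring

theorem ncard_adj_dist_eq [Finite W] (hG : IsDRG G D b c) (x y : W) (j : ℕ) :
    ({z | G.Adj y z ∧ G.dist x z = j}.ncard : ℝ) = intersectionNumber b c (G.dist x y) j := by
  unfold intersectionNumber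
  split_ifs with hlower hsame hupper
  · rw [← hG.ncard_adj_dist_add_one_eq_dist, ← hlower]
    simp only [Nat.add_right_cancel_iff]
  · rw [hsame, hG.ncard_adj_dist_eq_dist]
  · rw [hupper, hG.ncard_adj_dist_eq_dist_add_one]
  · rw [Nat.cast_eq_zero, Set.ncard_eq_zero, Set.eq_empty_iff_forall_notMem]
    rintro z ⟨hyz, rfl⟩
    have hstep := hyz.diff_dist_adj (u := x)
    lia

end IntersectionNumbers

section DistanceMatrices

variable {G : SimpleGraph V} {D : ℕ} {b c : ℕ → ℕ}

omit [DecidableEq V] in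
theorem distM_one_mul_distM (hG : IsDRG G D b c) (j : Fin (D + 1)) :
    distM G 1 * distM G j = ∑ i : Fin (D + 1), intersectionMatrix D b c i j • distM G i := by
  ext x y
  rw [distM_one_mul_distM_apply, hG.ncard_adj_dist_eq, Matrix.sum_apply,
    Finset.sum_eq_single ⟨G.dist y x, Nat.lt_succ_of_le (hG.dist_le y x)⟩]
  · simp [intersectionMatrix, distM, G.dist_comm (u := x)]
  · intro i _ hi
    have hne : G.dist x y ≠ i := fun h => hi (Fin.ext (h.symm.trans G.dist_comm))
    simp [distM, hne]
  · simp

theorem spectrum_distM_one_subset (hG : IsDRG G D b c) :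
    spectrum ℝ (distM G 1) ⊆ spectrum ℝ (intersectionMatrix D b c) := by
  intro t ht
  obtain ⟨v, hv, hvt⟩ := mem_spectrum_iff_exists_vecMul_eq_smul.1 ht
  obtain ⟨y, hy⟩ := Function.ne_iff.1 hv
  refine mem_spectrum_iff_exists_vecMul_eq_smul.2 ⟨fun i => (v ᵥ* distM G i) y, ?_, ?_⟩
  · have hzero : distM G 0 = 1 := by
      ext x z
      simp [distM, Matrix.one_apply, hG.1.dist_eq_zero_iff]
    exact Function.ne_iff.2 ⟨0, by simpa [hzero] using hy⟩
  · ext j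
    calc ∑ i : Fin (D + 1), (v ᵥ* distM G i) y * intersectionMatrix D b c i j
        = (v ᵥ* ∑ i : Fin (D + 1), intersectionMatrix D b c i j • distM G i) y := by
          simp [Matrix.vecMul_sum, Matrix.vecMul_smul, mul_comm]
      _ = (v ᵥ* distM G 1 ᵥ* distM G j) y := by
          rw [← hG.distM_one_mul_distM, Matrix.vecMul_vecMul]
      _ = t * (v ᵥ* distM G j) y := by
          rw [hvt, Matrix.smul_vecMul, Pi.smul_apply, smul_eq_mul]

theorem sum_eigenvalues_eq_sum_aInt (hG : IsDRG G D b c) {θ : Fin (D + 1) → ℝ}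
    (hinj : Function.Injective θ) (hmem : ∀ i, θ i ∈ spectrum ℝ (distM G 1)) :
    ∑ i, θ i = ∑ i : Fin (D + 1), aInt b c i := by
  rw [← trace_intersectionMatrix]
  exact (trace_eq_sum_of_injective_of_mem_spectrum hinj
    fun i => hG.spectrum_distM_one_subset (hmem i)).symm

end DistanceMatrices

end IsDRG

theorem Rq_eq_Rq_iff {b c : ℕ → ℕ} {q x y : ℝ} (hq : q ≠ 0) (hc : c 2 ≠ 0) (hxy : x ≠ y) :
    Rq b c q x = Rq b c q y ↔ x + y = aInt b c 1 - (q + 1) * c 2 := by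
  have hcoeff : -(1 / ((c 2 : ℝ) * q ^ 2)) ≠ 0 := by simp [hq, hc]
  have hfactor :
      ((q ^ 2 + q + 1) * (c 2 : ℝ) - b 0 + ((q + 1) * c 2 - aInt b c 1) * x + x ^ 2) -
        ((q ^ 2 + q + 1) * c 2 - b 0 + ((q + 1) * c 2 - aInt b c 1) * y + y ^ 2) =
      (x - y) * (x + y - (aInt b c 1 - (q + 1) * c 2)) := by ring
  rw [Rq, Rq, mul_right_inj' hcoeff, ← sub_eq_zero, hfactor, mul_eq_zero,
    or_iff_right (sub_ne_zero.2 hxy), sub_eq_zero]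

/-- Proposition 3.3: for a distance-regular graph of diameter 3 with
intersection array `{k, b₁, b₂; 1, c₂, c₃}`, distinct adjacency eigenvalues
`k > θ₁ > θ₂ > θ₃` and `q ≠ 0`: for `1 ≤ i < j ≤ 3` and `l` the remaining index,
`R_q(θ_i) = R_q(θ_j) ↔ θ_l = qc₂ − b₂ + a₃`. -/
theorem stmt5 (G : SimpleGraph V) (b c : ℕ → ℕ) (hG : IsDRG G 3 b c)
    (θ₁ θ₂ θ₃ : ℝ) (h1 : (b 0 : ℝ) > θ₁) (h2 : θ₁ > θ₂) (h3 : θ₂ > θ₃)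
    (hspec : spectrum ℝ (distM G 1) = ({(b 0 : ℝ), θ₁, θ₂, θ₃} : Set ℝ))
    (q : ℝ) (hq : q ≠ 0) :
    (Rq b c q θ₁ = Rq b c q θ₂ ↔ θ₃ = q * (c 2 : ℝ) - (b 2 : ℝ) + aInt b c 3) ∧
    (Rq b c q θ₁ = Rq b c q θ₃ ↔ θ₂ = q * (c 2 : ℝ) - (b 2 : ℝ) + aInt b c 3) ∧
    (Rq b c q θ₂ = Rq b c q θ₃ ↔ θ₁ = q * (c 2 : ℝ) - (b 2 : ℝ) + aInt b c 3) := by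
  have hc : c 2 ≠ 0 := hG.c_ne_zero two_ne_zero (by norm_num)
  have hsum : (b 0 : ℝ) + θ₁ + θ₂ + θ₃ = aInt b c 1 + aInt b c 2 + aInt b c 3 := by
    have hanti : StrictAnti ![(b 0 : ℝ), θ₁, θ₂, θ₃] := by
      simp [h1, h2, h3]
    have htrace := hG.sum_eigenvalues_eq_sum_aInt hanti.injective
      (by simp [hspec, Fin.forall_fin_succ])
    simpa [Fin.sum_univ_four, hG.aInt_zero] using htrace
  have ha₂ : aInt b c 2 = b 0 - b 2 - c 2 := rfl
  rw [Rq_eq_Rq_iff hq hc h2.ne', Rq_eq_Rq_iff hq hc (h3.trans h2).ne', Rq_eq_Rq_iff hq hc h3.ne']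
  refine ⟨?_, ?_, ?_⟩ <;> constructor <;> intro h <;> linarith
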